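/- arXiv:1501.07532 — 5 statements merged into one kernel-verified Lean document; each statement's English description precedes it below -/
import Mathlib

section
/- For an admissible curve γ in G¹₃ and any x ∈ I, the vectors Q₂(x) and Q₃(x) are linearly dependent if and only if (𝒦²𝒯 − 𝒦𝒯° + 𝒯𝒦° − 𝒯³)(x) = 0. In particular, γ is of equiform AW(2)-type (Q₂ and Q₃ everywhere linearly dependent) if and only if 𝒦²𝒯 − 𝒦𝒯° + 𝒯𝒦° − 𝒯³ ≡ 0 on I. -/
/-!
Where the acceleration of the curve is not lightlike, `N` and `B` are linearly independent. Up to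
nonzero powers of `ρ`, `Q₂` and `Q₃` are linear combinations of `N` and `B`, so they are dependent
exactly when the `2 × 2` determinant of their coefficients vanishes, and this determinant is
`𝒦²𝒯 − 𝒦𝒯° + 𝒯𝒦° − 𝒯³`.
-/

noncomputable section

open Real

/-- Model of the pseudo-Galilean space `G¹₃` as `ℝ³`. -/
abbrev V3 := ℝ × ℝ × ℝ

/-- The pseudo-Galilean scalar product on `ℝ³`. -/
def pgInner (u v : V3) : ℝ :=
  if u.1 ≠ 0 ∨ v.1 ≠ 0 then u.1 * v.1 else u.2.1 * v.2.1 - u.2.2 * v.2.2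

/-- Curvature of the admissible curve `x ↦ (x, y x, z x)`. -/
def curv (y z : ℝ → ℝ) (x : ℝ) : ℝ :=
  Real.sqrt |(deriv (deriv y) x) ^ 2 - (deriv (deriv z) x) ^ 2|

/-- Torsion of the admissible curve `x ↦ (x, y x, z x)`. -/
def tors (y z : ℝ → ℝ) (x : ℝ) : ℝ :=
  (deriv (deriv y) x * deriv (deriv (deriv z)) x -
    deriv (deriv (deriv y)) x * deriv (deriv z) x) / (curv y z x) ^ 2

/-- Radius of curvature `ρ = 1/κ`. -/
def rho (y z : ℝ → ℝ) (x : ℝ) : ℝ := 1 / curv y z x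

/-- Equiform curvature `𝒦 = ρ'`. -/
def eqK (y z : ℝ → ℝ) (x : ℝ) : ℝ := deriv (rho y z) x

/-- Equiform torsion `𝒯 = ρ·τ`. -/
def eqT (y z : ℝ → ℝ) (x : ℝ) : ℝ := rho y z x * tors y z x

/-- Frenet tangent `e₁ = (1, y', z')`. -/
def e1 (y z : ℝ → ℝ) (x : ℝ) : V3 := (1, deriv y x, deriv z x)

/-- Frenet principal normal `e₂ = (1/κ)(0, y'', z'')`. -/
def e2 (y z : ℝ → ℝ) (x : ℝ) : V3 :=
  (0, deriv (deriv y) x / curv y z x, deriv (deriv z) x / curv y z x)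

/-- Frenet binormal `e₃ = (1/κ)(0, ε·z'', ε·y'')`. -/
def e3 (y z : ℝ → ℝ) (ε : ℝ) (x : ℝ) : V3 :=
  (0, ε * deriv (deriv z) x / curv y z x, ε * deriv (deriv y) x / curv y z x)

/-- Equiform tangent `T = ρ·e₁`. -/
def Tv (y z : ℝ → ℝ) (x : ℝ) : V3 := rho y z x • e1 y z x

/-- Equiform principal normal `N = ρ·e₂`. -/
def Nv (y z : ℝ → ℝ) (x : ℝ) : V3 := rho y z x • e2 y z x

/-- Equiform binormal `B = ρ·e₃`. -/
def Bv (y z : ℝ → ℝ) (ε : ℝ) (x : ℝ) : V3 := rho y z x • e3 y z ε x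

/-- Derivative with respect to the equiform parameter: `f° = ρ·f'`. -/
def eqD {E : Type*} [NormedAddCommGroup E] [NormedSpace ℝ E]
    (y z : ℝ → ℝ) (f : ℝ → E) (x : ℝ) : E := rho y z x • deriv f x

/-- `Q₁ = ρ⁻²·N`. -/
def Q1 (y z : ℝ → ℝ) (x : ℝ) : V3 := ((rho y z x) ^ (-2 : ℤ)) • Nv y z x

/-- `Q₂ = ρ⁻³·(−𝒦N + 𝒯B)`. -/
def Q2 (y z : ℝ → ℝ) (ε : ℝ) (x : ℝ) : V3 :=
  ((rho y z x) ^ (-3 : ℤ)) • ((-(eqK y z x)) • Nv y z x + (eqT y z x) • Bv y z ε x)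

/-- `Q₃ = ρ⁻⁴·[(2𝒦² + 𝒯² − 𝒦°)N + (𝒯° − 3𝒦𝒯)B]`. -/
def Q3 (y z : ℝ → ℝ) (ε : ℝ) (x : ℝ) : V3 :=
  ((rho y z x) ^ (-4 : ℤ)) •
    ((2 * (eqK y z x) ^ 2 + (eqT y z x) ^ 2 - eqD y z (eqK y z) x) • Nv y z x +
      (eqD y z (eqT y z) x - 3 * eqK y z x * eqT y z x) • Bv y z ε x)

theorem linearIndependent_pair_zero_prod_iff {R : Type*} [CommRing R] [IsDomain R]
    {a b c d : R} :
    LinearIndependent R ![((0 : R), a, b), (0, c, d)] ↔ a * d ≠ b * c := by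
  have h_basis : LinearIndependent R ![((0 : R), (1 : R), (0 : R)), (0, 0, 1)] := by
    simp [LinearIndependent.pair_iff]
  simpa [h_basis] using LinearIndependent.pair_add_smul_add_smul_iff (R := R)
    (x := ((0 : R), (1 : R), (0 : R))) (y := (0, 0, 1)) a b c d

section EquiformFrame

variable {y z : ℝ → ℝ} {ε x : ℝ}

theorem curv_ne_zero (h : deriv (deriv y) x ^ 2 - deriv (deriv z) x ^ 2 ≠ 0) :
    curv y z x ≠ 0 :=
  Real.sqrt_ne_zero'.2 (abs_pos.2 h)

theorem rho_ne_zero (h : deriv (deriv y) x ^ 2 - deriv (deriv z) x ^ 2 ≠ 0) : rho y z x ≠ 0 :=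
  one_div_ne_zero (curv_ne_zero h)

theorem linearIndependent_e2_e3
    (h : ε * (deriv (deriv y) x ^ 2 - deriv (deriv z) x ^ 2) ≠ 0) :
    LinearIndependent ℝ ![e2 y z x, e3 y z ε x] := by
  have hκ : curv y z x ≠ 0 := curv_ne_zero (right_ne_zero_of_mul h)
  have h_det :
      deriv (deriv y) x / curv y z x * (ε * deriv (deriv y) x / curv y z x) -
        deriv (deriv z) x / curv y z x * (ε * deriv (deriv z) x / curv y z x) =
      ε * (deriv (deriv y) x ^ 2 - deriv (deriv z) x ^ 2) / curv y z x ^ 2 := by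
    ring
  rw [e2, e3, linearIndependent_pair_zero_prod_iff, ← sub_ne_zero, h_det]
  exact div_ne_zero h (pow_ne_zero 2 hκ)

theorem linearIndependent_Nv_Bv
    (h : ε * (deriv (deriv y) x ^ 2 - deriv (deriv z) x ^ 2) ≠ 0) :
    LinearIndependent ℝ ![Nv y z x, Bv y z ε x] :=
  (LinearIndependent.pair_smul_iff (rho_ne_zero (right_ne_zero_of_mul h))).2
    (linearIndependent_e2_e3 h)

theorem linearIndependent_Q2_Q3_iff
    (h : ε * (deriv (deriv y) x ^ 2 - deriv (deriv z) x ^ 2) ≠ 0) :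
    LinearIndependent ℝ ![Q2 y z ε x, Q3 y z ε x] ↔
      -eqK y z x * (eqD y z (eqT y z) x - 3 * eqK y z x * eqT y z x) ≠
        eqT y z x * (2 * eqK y z x ^ 2 + eqT y z x ^ 2 - eqD y z (eqK y z) x) := by
  have hρ : rho y z x ≠ 0 := rho_ne_zero (right_ne_zero_of_mul h)
  rw [Q2, Q3, LinearIndependent.pair_smul_smul_iff (zpow_ne_zero _ hρ).isUnit
      (zpow_ne_zero _ hρ).isUnit, LinearIndependent.pair_add_smul_add_smul_iff,
    and_iff_right (linearIndependent_Nv_Bv h)]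

theorem not_linearIndependent_Q2_Q3_iff
    (h : ε * (deriv (deriv y) x ^ 2 - deriv (deriv z) x ^ 2) ≠ 0) :
    ¬ LinearIndependent ℝ ![Q2 y z ε x, Q3 y z ε x] ↔
      eqK y z x ^ 2 * eqT y z x - eqK y z x * eqD y z (eqT y z) x +
        eqT y z x * eqD y z (eqK y z) x - eqT y z x ^ 3 = 0 := by
  rw [linearIndependent_Q2_Q3_iff h, not_not, ← sub_eq_zero]
  ring_nf

end EquiformFrame

/-- `Q₂(x)` and `Q₃(x)` are linearly dependent iff
`(𝒦²𝒯 − 𝒦𝒯° + 𝒯𝒦° − 𝒯³)(x) = 0`; in particular `γ` is of equiform AW(2)-type iff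
`𝒦²𝒯 − 𝒦𝒯° + 𝒯𝒦° − 𝒯³ ≡ 0` on `I`. -/
theorem pg_AW2_iff (I : Set ℝ) (y z : ℝ → ℝ) (ε : ℝ)
    (hI : IsOpen I) (hy : ContDiff ℝ (⊤ : ℕ∞) y) (hz : ContDiff ℝ (⊤ : ℕ∞) z)
    (hadm : ∀ x ∈ I, (deriv (deriv y) x) ^ 2 - (deriv (deriv z) x) ^ 2 ≠ 0)
    (hε : ε = 1 ∨ ε = -1)
    (hsign : ∀ x ∈ I, 0 < ε * ((deriv (deriv y) x) ^ 2 - (deriv (deriv z) x) ^ 2)) :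
    (∀ x ∈ I,
      (¬ LinearIndependent ℝ ![Q2 y z ε x, Q3 y z ε x] ↔
        (eqK y z x) ^ 2 * eqT y z x - eqK y z x * eqD y z (eqT y z) x +
          eqT y z x * eqD y z (eqK y z) x - (eqT y z x) ^ 3 = 0)) ∧
    ((∀ x ∈ I, ¬ LinearIndependent ℝ ![Q2 y z ε x, Q3 y z ε x]) ↔
      (∀ x ∈ I,
        (eqK y z x) ^ 2 * eqT y z x - eqK y z x * eqD y z (eqT y z) x +
          eqT y z x * eqD y z (eqK y z) x - (eqT y z x) ^ 3 = 0)) := by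
  have h_pointwise := fun x hx ↦ not_linearIndependent_Q2_Q3_iff (hsign x hx).ne'
  exact ⟨h_pointwise, forall₂_congr h_pointwise⟩
end
end

section
/- Let γ be an admissible curve in G¹₃ whose equiform curvature 𝒦 is a nonzero constant and whose equiform torsion 𝒯 is identically zero (an equiform isotropic logarithmic spiral). Then the equiform AW(2) identity ⟨Q₂(x), Q₂(x)⟩·Q₃(x) = ⟨Q₃(x), Q₂(x)⟩·Q₂(x) holds for all x ∈ I; in particular Q₂(x) and Q₃(x) are linearly dependent at every x, so γ is of equiform AW(2)-type. -/
noncomputable section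

open Real

/-!
If `𝒯` vanishes identically then so does `𝒯°`, so the `B`-components of `Q₂` and `Q₃` drop out and
both vectors are multiples of `N`. For two multiples of one vector, the AW(2) identity is nothing
but the homogeneity of the scalar product.
-/

-- Homogeneity survives the case distinction in `pgInner`; additivity does not.
theorem pgInner_smul_left (a : ℝ) (u v : V3) : pgInner (a • u) v = a * pgInner u v := by
  rcases eq_or_ne a 0 with rfl | ha
  · simp [pgInner]
  · simp only [pgInner, Prod.smul_fst, Prod.smul_snd, smul_eq_mul, mul_ne_zero_iff_left ha]
    split_ifs <;> ring

theorem pgInner_self_smul_smul_comm (a b : ℝ) (w : V3) :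
    pgInner (a • w) (a • w) • b • w = pgInner (b • w) (a • w) • a • w := by
  rw [pgInner_smul_left, pgInner_smul_left]
  module

theorem not_linearIndependent_pair_smul {R M : Type*} [CommRing R] [Nontrivial R]
    [AddCommGroup M] [Module R M] (a b : R) (w : M) :
    ¬ LinearIndependent R ![a • w, b • w] := by
  intro h
  obtain ⟨-, ha⟩ := LinearIndependent.pair_iff.1 h b (-a) (by module)
  exact h.ne_zero 0 (by simp [neg_eq_zero.1 ha])

theorem eqD_eq_zero_of_eqOn_const {E : Type*} [NormedAddCommGroup E] [NormedSpace ℝ E]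
    {I : Set ℝ} (hI : IsOpen I) (y z : ℝ → ℝ) {f : ℝ → E} {c : E}
    (hf : Set.EqOn f (fun _ => c) I) {x : ℝ} (hx : x ∈ I) : eqD y z f x = 0 := by
  have hfc : f =ᶠ[nhds x] fun _ => c := hf.eventuallyEq_of_mem (hI.mem_nhds hx)
  rw [eqD, hfc.deriv_eq, deriv_const, smul_zero]

theorem Q2_eq_smul_Nv {y z : ℝ → ℝ} {x : ℝ} (ε : ℝ) (hT : eqT y z x = 0) :
    Q2 y z ε x = (rho y z x ^ (-3 : ℤ) * -eqK y z x) • Nv y z x := by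
  rw [Q2, hT, zero_smul, add_zero, smul_smul]

theorem Q3_eq_smul_Nv {y z : ℝ → ℝ} {x : ℝ} (ε : ℝ) (hT : eqT y z x = 0)
    (hT' : eqD y z (eqT y z) x = 0) :
    Q3 y z ε x =
      (rho y z x ^ (-4 : ℤ) * (2 * eqK y z x ^ 2 - eqD y z (eqK y z) x)) • Nv y z x := by
  rw [Q3, hT, hT']
  module

theorem pg_log_spiral_AW2_general (I : Set ℝ) (y z : ℝ → ℝ) (ε : ℝ)
    (hI : IsOpen I) (hy : ContDiffOn ℝ 4 y I) (hz : ContDiffOn ℝ 4 z I)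
    (hε : ε = 1 ∨ ε = -1)
    (hsign : ∀ x ∈ I, 0 < ε * ((deriv (deriv y) x) ^ 2 - (deriv (deriv z) x) ^ 2))
    (hT : ∀ x ∈ I, eqT y z x = 0) :
    ∀ x ∈ I,
      (pgInner (Q2 y z ε x) (Q2 y z ε x)) • Q3 y z ε x =
        (pgInner (Q3 y z ε x) (Q2 y z ε x)) • Q2 y z ε x ∧
      ¬ LinearIndependent ℝ ![Q2 y z ε x, Q3 y z ε x] := by
  intro x hx
  have hT' : eqD y z (eqT y z) x = 0 := eqD_eq_zero_of_eqOn_const hI y z hT hx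
  rw [Q2_eq_smul_Nv ε (hT x hx), Q3_eq_smul_Nv ε (hT x hx) hT']
  exact ⟨pgInner_self_smul_smul_comm _ _ _, not_linearIndependent_pair_smul _ _ _⟩

/-- an equiform isotropic logarithmic spiral (`𝒦` a nonzero constant, `𝒯 ≡ 0`)
satisfies the equiform AW(2) identity, so `Q₂` and `Q₃` are everywhere linearly dependent. -/
theorem pg_log_spiral_AW2 (I : Set ℝ) (y z : ℝ → ℝ) (ε : ℝ) (c : ℝ)
    (hI : IsOpen I) (hy : ContDiff ℝ (⊤ : ℕ∞) y) (hz : ContDiff ℝ (⊤ : ℕ∞) z)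
    (hadm : ∀ x ∈ I, (deriv (deriv y) x) ^ 2 - (deriv (deriv z) x) ^ 2 ≠ 0)
    (hε : ε = 1 ∨ ε = -1)
    (hsign : ∀ x ∈ I, 0 < ε * ((deriv (deriv y) x) ^ 2 - (deriv (deriv z) x) ^ 2))
    (hc : c ≠ 0) (hK : ∀ x ∈ I, eqK y z x = c) (hT : ∀ x ∈ I, eqT y z x = 0) :
    ∀ x ∈ I,
      (pgInner (Q2 y z ε x) (Q2 y z ε x)) • Q3 y z ε x =
        (pgInner (Q3 y z ε x) (Q2 y z ε x)) • Q2 y z ε x ∧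
      ¬ LinearIndependent ℝ ![Q2 y z ε x, Q3 y z ε x] :=
  pg_log_spiral_AW2_general I y z ε hI (contDiff_infty.1 hy 4).contDiffOn
    (contDiff_infty.1 hz 4).contDiffOn hε hsign hT
end
end

section
/- Let γ and γ̄ be admissible curves in G¹₃ defined on the same connected open interval I forming an equiform Bertrand pair: both equiform curvatures vanish identically (𝒦 ≡ 0 and 𝒦̄ ≡ 0) and the principal normals are parallel at corresponding points (N̄(x) is a scalar multiple of N(x) for all x). Then the pseudo-Galilean scalar product ⟨T̄(x), T(x)⟩ of the equiform tangent vectors is constant on I; i.e. the angle between the tangents at corresponding points is constant. -/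
noncomputable section

open Real

/-- The curve `x ↦ (x, y x, z x)` over `I` is admissible. Smoothness is encoded as
class `C³`, the regularity at which `𝒦` and `τ` are defined by genuine derivatives. -/
structure IsAdmissibleOn (y z : ℝ → ℝ) (I : Set ℝ) : Prop where
  contDiffOn_y : ContDiffOn ℝ 3 y I
  contDiffOn_z : ContDiffOn ℝ 3 z I
  sq_sub_sq_ne_zero : ∀ x ∈ I, deriv (deriv y) x ^ 2 - deriv (deriv z) x ^ 2 ≠ 0

theorem differentiableOn_deriv_deriv {𝕜 E : Type*} [NontriviallyNormedField 𝕜]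
    [NormedAddCommGroup E] [NormedSpace 𝕜 E] {f : 𝕜 → E} {s : Set 𝕜}
    (hf : ContDiffOn 𝕜 3 f s) (hs : IsOpen s) : DifferentiableOn 𝕜 (deriv (deriv f)) s :=
  have hf' : ContDiffOn 𝕜 2 (deriv f) s := hf.deriv_of_isOpen hs (by norm_num)
  have hf'' : ContDiffOn 𝕜 1 (deriv (deriv f)) s := hf'.deriv_of_isOpen hs (by norm_num)
  hf''.differentiableOn one_ne_zero

theorem pgInner_of_fst_ne_zero {u : V3} (hu : u.1 ≠ 0) (v : V3) : pgInner u v = u.1 * v.1 :=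
  if_pos (Or.inl hu)

section Curve

variable {y z : ℝ → ℝ} {x : ℝ}

theorem curv_pos (h : deriv (deriv y) x ^ 2 - deriv (deriv z) x ^ 2 ≠ 0) : 0 < curv y z x :=
  Real.sqrt_pos.2 (abs_pos.2 h)

theorem rho_pos (h : deriv (deriv y) x ^ 2 - deriv (deriv z) x ^ 2 ≠ 0) : 0 < rho y z x :=
  one_div_pos.2 (curv_pos h)

theorem differentiableAt_curv (hy : DifferentiableAt ℝ (deriv (deriv y)) x)
    (hz : DifferentiableAt ℝ (deriv (deriv z)) x)
    (h : deriv (deriv y) x ^ 2 - deriv (deriv z) x ^ 2 ≠ 0) :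
    DifferentiableAt ℝ (curv y z) x :=
  (((hy.pow 2).sub (hz.pow 2)).abs h).sqrt (abs_ne_zero.2 h)

theorem differentiableAt_rho (hy : DifferentiableAt ℝ (deriv (deriv y)) x)
    (hz : DifferentiableAt ℝ (deriv (deriv z)) x)
    (h : deriv (deriv y) x ^ 2 - deriv (deriv z) x ^ 2 ≠ 0) :
    DifferentiableAt ℝ (rho y z) x :=
  (differentiableAt_const 1).div (differentiableAt_curv hy hz h) (curv_pos h).ne'

end Curve

theorem Tv_fst (y z : ℝ → ℝ) (x : ℝ) : (Tv y z x).1 = rho y z x :=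
  mul_one _

theorem pgInner_Tv {ybar zbar : ℝ → ℝ} {s : ℝ}
    (h : deriv (deriv ybar) s ^ 2 - deriv (deriv zbar) s ^ 2 ≠ 0) (y z : ℝ → ℝ) (x : ℝ) :
    pgInner (Tv ybar zbar s) (Tv y z x) = rho ybar zbar s * rho y z x := by
  have hfst : (Tv ybar zbar s).1 ≠ 0 := by
    rw [Tv_fst]
    exact (rho_pos h).ne'
  rw [pgInner_of_fst_ne_zero hfst, Tv_fst, Tv_fst]

namespace IsAdmissibleOn

variable {y z : ℝ → ℝ} {I : Set ℝ}

theorem of_contDiff (hy : ContDiff ℝ 3 y) (hz : ContDiff ℝ 3 z)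
    (h : ∀ x ∈ I, deriv (deriv y) x ^ 2 - deriv (deriv z) x ^ 2 ≠ 0) : IsAdmissibleOn y z I where
  contDiffOn_y := hy.contDiffOn
  contDiffOn_z := hz.contDiffOn
  sq_sub_sq_ne_zero := h

theorem differentiableOn_rho (h : IsAdmissibleOn y z I) (hI : IsOpen I) :
    DifferentiableOn ℝ (rho y z) I := fun x hx =>
  have hy : DifferentiableAt ℝ (deriv (deriv y)) x :=
    (differentiableOn_deriv_deriv h.contDiffOn_y hI).differentiableAt (hI.mem_nhds hx)
  have hz : DifferentiableAt ℝ (deriv (deriv z)) x :=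
    (differentiableOn_deriv_deriv h.contDiffOn_z hI).differentiableAt (hI.mem_nhds hx)
  (differentiableAt_rho hy hz (h.sq_sub_sq_ne_zero x hx)).differentiableWithinAt

theorem rho_eq_of_eqK_eq_zero (h : IsAdmissibleOn y z I) (hI : IsOpen I)
    (hIconn : IsPreconnected I) (hK : ∀ x ∈ I, eqK y z x = 0) {x₁ x₂ : ℝ} (h₁ : x₁ ∈ I)
    (h₂ : x₂ ∈ I) : rho y z x₁ = rho y z x₂ :=
  hI.is_const_of_deriv_eq_zero hIconn (h.differentiableOn_rho hI) hK h₁ h₂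

end IsAdmissibleOn

theorem pg_bertrand_tangent_angle_constant_general {I : Set ℝ} {y z ybar zbar : ℝ → ℝ}
    (hI : IsOpen I) (hIconn : IsPreconnected I)
    (h : IsAdmissibleOn y z I) (hbar : IsAdmissibleOn ybar zbar I)
    (hK : ∀ x ∈ I, eqK y z x = 0) (hKbar : ∀ x ∈ I, eqK ybar zbar x = 0)
    {x₁ x₂ : ℝ} (h₁ : x₁ ∈ I) (h₂ : x₂ ∈ I) :
    pgInner (Tv ybar zbar x₁) (Tv y z x₁) = pgInner (Tv ybar zbar x₂) (Tv y z x₂) :=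
  calc
    pgInner (Tv ybar zbar x₁) (Tv y z x₁) = rho ybar zbar x₁ * rho y z x₁ :=
      pgInner_Tv (hbar.sq_sub_sq_ne_zero x₁ h₁) y z x₁
    _ = rho ybar zbar x₂ * rho y z x₂ := by
      rw [hbar.rho_eq_of_eqK_eq_zero hI hIconn hKbar h₁ h₂,
        h.rho_eq_of_eqK_eq_zero hI hIconn hK h₁ h₂]
    _ = pgInner (Tv ybar zbar x₂) (Tv y z x₂) :=
      (pgInner_Tv (hbar.sq_sub_sq_ne_zero x₂ h₂) y z x₂).symm

/-- for an equiform Bertrand pair (`𝒦 ≡ 0 ≡ 𝒦̄`, parallel principal normals),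
the pseudo-Galilean scalar product of the equiform tangents is constant on `I`. -/
theorem pg_bertrand_tangent_angle_constant (I : Set ℝ) (y z ybar zbar : ℝ → ℝ)
    (hI : IsOpen I) (hIconn : IsPreconnected I)
    (hy : ContDiff ℝ (⊤ : ℕ∞) y) (hz : ContDiff ℝ (⊤ : ℕ∞) z)
    (hybar : ContDiff ℝ (⊤ : ℕ∞) ybar) (hzbar : ContDiff ℝ (⊤ : ℕ∞) zbar)
    (hadm : ∀ x ∈ I, (deriv (deriv y) x) ^ 2 - (deriv (deriv z) x) ^ 2 ≠ 0)
    (hadmbar : ∀ x ∈ I, (deriv (deriv ybar) x) ^ 2 - (deriv (deriv zbar) x) ^ 2 ≠ 0)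
    (hK : ∀ x ∈ I, eqK y z x = 0)
    (hKbar : ∀ x ∈ I, eqK ybar zbar x = 0)
    (hN : ∀ x ∈ I, ∃ c : ℝ, Nv ybar zbar x = c • Nv y z x) :
    ∀ x₁ ∈ I, ∀ x₂ ∈ I,
      pgInner (Tv ybar zbar x₁) (Tv y z x₁) = pgInner (Tv ybar zbar x₂) (Tv y z x₂) :=
  fun _ h₁ _ h₂ => pg_bertrand_tangent_angle_constant_general hI hIconn
    (.of_contDiff (contDiff_infty.1 hy 3) (contDiff_infty.1 hz 3) hadm)
    (.of_contDiff (contDiff_infty.1 hybar 3) (contDiff_infty.1 hzbar 3) hadmbar) hK hKbar h₁ h₂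
end
end

section
/- Let a, b ∈ ℝ with a ≠ 0, b ≠ 0 and a² ≠ b², and consider the curve r : ℝ → ℝ³ given by r(s) = (s, e^{−as}((a²+b²)cosh(bs) + 2ab·sinh(bs))/(a²−b²)², e^{−as}(2ab·cosh(bs) + (a²+b²)sinh(bs))/(a²−b²)²). Then r is an admissible curve in G¹₃ with y''(s) = e^{−as}cosh(bs) and z''(s) = e^{−as}sinh(bs), curvature κ(s) = e^{−as} and torsion τ(s) = b, and its equiform curvature and equiform torsion are 𝒦(s) = a·e^{as} and 𝒯(s) = b·e^{as}. -/
noncomputable section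

open Real

/-!
In hyperbolic polar coordinates `y'' = k cosh θ`, `z'' = k sinh θ`, the identity
`cosh² - sinh² = 1` gives `κ = |k|` and `τ = θ'`, so for `k > 0` also `𝒦 = -k' / k²` and
`𝒯 = θ' / k`. For the helix, `k = e^{-as}` and `θ = bs`.

To find `y''` and `z''`, note that differentiation acts on the span of `e^{-as} cosh (bs)` and
`e^{-as} sinh (bs)` by the symmetric matrix `[-a, b; b, -a]`, of determinant `a² - b²`. The
coefficients of `y` and `z` are the columns of the inverse square of this matrix.
-/

theorem mul_cosh_sq_sub_mul_sinh_sq (r φ : ℝ) : (r * cosh φ) ^ 2 - (r * sinh φ) ^ 2 = r ^ 2 := by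
  rw [mul_pow, mul_pow, ← mul_sub, cosh_sq_sub_sinh_sq, mul_one]

section PolarAcceleration

open scoped Topology

/-- Near `s`, the acceleration `(y'', z'')` of the curve `x ↦ (x, y x, z x)` has hyperbolic polar
coordinates `(k, θ)`. The radius `k` may have either sign. -/
structure HasPolarAccelerationAt (y z k θ : ℝ → ℝ) (s : ℝ) : Prop where
  deriv_deriv_fst : deriv (deriv y) =ᶠ[𝓝 s] fun t => k t * cosh (θ t)
  deriv_deriv_snd : deriv (deriv z) =ᶠ[𝓝 s] fun t => k t * sinh (θ t)

namespace HasPolarAccelerationAt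

variable {y z k θ : ℝ → ℝ} {s k' θ' : ℝ}

theorem curv_eventuallyEq (h : HasPolarAccelerationAt y z k θ s) :
    curv y z =ᶠ[𝓝 s] fun t => |k t| := by
  filter_upwards [h.deriv_deriv_fst, h.deriv_deriv_snd] with t hy hz
  rw [curv, hy, hz, mul_cosh_sq_sub_mul_sinh_sq, abs_sq, sqrt_sq_eq_abs]

theorem curv_eq (h : HasPolarAccelerationAt y z k θ s) : curv y z s = |k s| :=
  h.curv_eventuallyEq.eq_of_nhds

theorem tors_eq (h : HasPolarAccelerationAt y z k θ s) (hk : DifferentiableAt ℝ k s)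
    (hθ : HasDerivAt θ θ' s) (hks : k s ≠ 0) : tors y z s = θ' := by
  have hy : deriv (deriv (deriv y)) s = deriv k s * cosh (θ s) + k s * (sinh (θ s) * θ') :=
    h.deriv_deriv_fst.deriv_eq.trans (hk.hasDerivAt.mul hθ.cosh).deriv
  have hz : deriv (deriv (deriv z)) s = deriv k s * sinh (θ s) + k s * (cosh (θ s) * θ') :=
    h.deriv_deriv_snd.deriv_eq.trans (hk.hasDerivAt.mul hθ.sinh).deriv
  rw [tors, h.curv_eq, hy, hz, h.deriv_deriv_fst.eq_of_nhds, h.deriv_deriv_snd.eq_of_nhds,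
    sq_abs, div_eq_iff (pow_ne_zero 2 hks)]
  linear_combination θ' * mul_cosh_sq_sub_mul_sinh_sq (k s) (θ s)

theorem eqK_eq (h : HasPolarAccelerationAt y z k θ s) (hk : HasDerivAt k k' s) (hks : 0 < k s) :
    eqK y z s = -k' / k s ^ 2 := by
  have hrho : rho y z =ᶠ[𝓝 s] k⁻¹ := by
    filter_upwards [h.curv_eventuallyEq, hk.continuousAt.eventually_const_lt hks] with t hκ hkt
    rw [rho, hκ, abs_of_pos hkt, one_div, Pi.inv_apply]
  exact hrho.deriv_eq.trans (hk.inv hks.ne').deriv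

theorem eqT_eq (h : HasPolarAccelerationAt y z k θ s) (hk : DifferentiableAt ℝ k s)
    (hθ : HasDerivAt θ θ' s) (hks : 0 < k s) : eqT y z s = θ' / k s := by
  rw [eqT, rho, h.curv_eq, abs_of_pos hks, h.tors_eq hk hθ hks.ne', one_div_mul_eq_div]

end HasPolarAccelerationAt

end PolarAcceleration

theorem hasDerivAt_exp_neg_mul (a s : ℝ) :
    HasDerivAt (fun t => exp (-(a * t))) (-(a * exp (-(a * s)))) s := by
  rw [mul_comm a (exp _), ← mul_neg]
  exact (hasDerivAt_const_mul a).fun_neg.exp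

theorem deriv_exp_mul_cosh_add_sinh_div (a b p q d : ℝ) :
    deriv (fun t => exp (-(a * t)) * (p * cosh (b * t) + q * sinh (b * t)) / d) =
      fun t => exp (-(a * t)) *
        ((b * q - a * p) * cosh (b * t) + (b * p - a * q) * sinh (b * t)) / d := by
  funext t
  have hb : HasDerivAt (fun t => b * t) b t := hasDerivAt_const_mul b
  have h := ((hasDerivAt_exp_neg_mul a t).mul
    ((hb.cosh.const_mul p).add (hb.sinh.const_mul q))).div_const d
  refine h.deriv.trans ?_
  simp only [Pi.add_apply]
  ring

theorem deriv_deriv_exp_mul_cosh_add_sinh_div (a b p q d : ℝ) :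
    deriv (deriv fun t => exp (-(a * t)) * (p * cosh (b * t) + q * sinh (b * t)) / d) =
      fun t => exp (-(a * t)) *
        (((a ^ 2 + b ^ 2) * p - 2 * a * b * q) * cosh (b * t) +
          ((a ^ 2 + b ^ 2) * q - 2 * a * b * p) * sinh (b * t)) / d := by
  rw [deriv_exp_mul_cosh_add_sinh_div, deriv_exp_mul_cosh_add_sinh_div]
  funext t
  ring

section Helix

variable {a b : ℝ}

theorem deriv_deriv_helix_fst (hab : a ^ 2 ≠ b ^ 2) :
    deriv (deriv fun t => exp (-(a * t)) *
      ((a ^ 2 + b ^ 2) * cosh (b * t) + 2 * a * b * sinh (b * t)) / (a ^ 2 - b ^ 2) ^ 2) =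
      fun t => exp (-(a * t)) * cosh (b * t) := by
  rw [deriv_deriv_exp_mul_cosh_add_sinh_div]
  funext t
  rw [div_eq_iff (pow_ne_zero 2 (sub_ne_zero.mpr hab))]
  ring

theorem deriv_deriv_helix_snd (hab : a ^ 2 ≠ b ^ 2) :
    deriv (deriv fun t => exp (-(a * t)) *
      (2 * a * b * cosh (b * t) + (a ^ 2 + b ^ 2) * sinh (b * t)) / (a ^ 2 - b ^ 2) ^ 2) =
      fun t => exp (-(a * t)) * sinh (b * t) := by
  rw [deriv_deriv_exp_mul_cosh_add_sinh_div]
  funext t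
  rw [div_eq_iff (pow_ne_zero 2 (sub_ne_zero.mpr hab))]
  ring

end Helix

/-- the equiform timelike general helix of Example 1 is admissible, with
`y'' = e^{−as}cosh(bs)`, `z'' = e^{−as}sinh(bs)`, `κ = e^{−as}`, `τ = b`,
`𝒦 = a·e^{as}` and `𝒯 = b·e^{as}`. -/
theorem pg_example1_general_helix (a b : ℝ) (ha : a ≠ 0) (hb : b ≠ 0) (hab : a ^ 2 ≠ b ^ 2) :
    ∀ s : ℝ,
      deriv (deriv (fun t => Real.exp (-(a * t)) *
        ((a ^ 2 + b ^ 2) * Real.cosh (b * t) + 2 * a * b * Real.sinh (b * t)) /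
          (a ^ 2 - b ^ 2) ^ 2)) s = Real.exp (-(a * s)) * Real.cosh (b * s) ∧
      deriv (deriv (fun t => Real.exp (-(a * t)) *
        (2 * a * b * Real.cosh (b * t) + (a ^ 2 + b ^ 2) * Real.sinh (b * t)) /
          (a ^ 2 - b ^ 2) ^ 2)) s = Real.exp (-(a * s)) * Real.sinh (b * s) ∧
      (deriv (deriv (fun t => Real.exp (-(a * t)) *
        ((a ^ 2 + b ^ 2) * Real.cosh (b * t) + 2 * a * b * Real.sinh (b * t)) /
          (a ^ 2 - b ^ 2) ^ 2)) s) ^ 2 -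
      (deriv (deriv (fun t => Real.exp (-(a * t)) *
        (2 * a * b * Real.cosh (b * t) + (a ^ 2 + b ^ 2) * Real.sinh (b * t)) /
          (a ^ 2 - b ^ 2) ^ 2)) s) ^ 2 ≠ 0 ∧
      curv (fun t => Real.exp (-(a * t)) *
          ((a ^ 2 + b ^ 2) * Real.cosh (b * t) + 2 * a * b * Real.sinh (b * t)) /
            (a ^ 2 - b ^ 2) ^ 2)
        (fun t => Real.exp (-(a * t)) *
          (2 * a * b * Real.cosh (b * t) + (a ^ 2 + b ^ 2) * Real.sinh (b * t)) /
            (a ^ 2 - b ^ 2) ^ 2) s = Real.exp (-(a * s)) ∧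
      tors (fun t => Real.exp (-(a * t)) *
          ((a ^ 2 + b ^ 2) * Real.cosh (b * t) + 2 * a * b * Real.sinh (b * t)) /
            (a ^ 2 - b ^ 2) ^ 2)
        (fun t => Real.exp (-(a * t)) *
          (2 * a * b * Real.cosh (b * t) + (a ^ 2 + b ^ 2) * Real.sinh (b * t)) /
            (a ^ 2 - b ^ 2) ^ 2) s = b ∧
      eqK (fun t => Real.exp (-(a * t)) *
          ((a ^ 2 + b ^ 2) * Real.cosh (b * t) + 2 * a * b * Real.sinh (b * t)) /
            (a ^ 2 - b ^ 2) ^ 2)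
        (fun t => Real.exp (-(a * t)) *
          (2 * a * b * Real.cosh (b * t) + (a ^ 2 + b ^ 2) * Real.sinh (b * t)) /
            (a ^ 2 - b ^ 2) ^ 2) s = a * Real.exp (a * s) ∧
      eqT (fun t => Real.exp (-(a * t)) *
          ((a ^ 2 + b ^ 2) * Real.cosh (b * t) + 2 * a * b * Real.sinh (b * t)) /
            (a ^ 2 - b ^ 2) ^ 2)
        (fun t => Real.exp (-(a * t)) *
          (2 * a * b * Real.cosh (b * t) + (a ^ 2 + b ^ 2) * Real.sinh (b * t)) /
            (a ^ 2 - b ^ 2) ^ 2) s = b * Real.exp (a * s) := by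
  intro s
  have hy := deriv_deriv_helix_fst hab
  have hz := deriv_deriv_helix_snd hab
  have hpolar := HasPolarAccelerationAt.mk (k := fun t => exp (-(a * t))) (θ := fun t => b * t)
    (s := s) (.of_eq hy) (.of_eq hz)
  have hk := hasDerivAt_exp_neg_mul a s
  have hθ : HasDerivAt (fun t => b * t) b s := hasDerivAt_const_mul b
  have hpos : 0 < exp (-(a * s)) := exp_pos _
  refine ⟨congrFun hy s, congrFun hz s, ?_, hpolar.curv_eq.trans (abs_of_pos hpos),
    hpolar.tors_eq hk.differentiableAt hθ hpos.ne', ?_, ?_⟩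
  · rw [hy, hz, mul_cosh_sq_sub_mul_sinh_sq]
    exact pow_ne_zero 2 hpos.ne'
  · rw [hpolar.eqK_eq hk hpos, neg_neg, exp_neg]
    field_simp
  · rw [hpolar.eqT_eq hk.differentiableAt hθ hpos, exp_neg, div_inv_eq_mul]
end
end

section
/- Let a, b ∈ ℝ with a ≠ 0, and let I = {s ∈ ℝ : as + b > 0}. The curve r : I → ℝ³ given by r(s) = (s, (as+b)(ln(as+b) − 1)/a², 0) (an equiform timelike isotropic logarithmic spiral) is an admissible curve in G¹₃ with curvature κ(s) = 1/(as+b) and torsion τ(s) = 0, and its equiform curvature and torsion are the constants 𝒦(s) = a and 𝒯(s) = 0. Consequently it satisfies the equiform AW(2) condition 𝒦²𝒯 − 𝒦𝒯° + 𝒯𝒦° − 𝒯³ ≡ 0 and the equiform AW(3) condition 𝒯° − 3𝒦𝒯 ≡ 0, but not the equiform AW(1) condition, since 2𝒦(s)² + 𝒯(s)² − 𝒦°(s) = 2a² ≠ 0 for all s ∈ I. -/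
noncomputable section

open Real

/-!
The second derivative of the spiral's `y`-coordinate is `1 / (a s + b)`, so its radius of curvature
is the affine function `ρ(s) = a s + b`. Hence `𝒦 = ρ'` is constantly `a` and `𝒦° = 0`. The curve
lies in the plane `z = 0`, so `τ` and with it `𝒯` vanish identically. Every term of the AW(2) and
AW(3) conditions has `𝒯` or `𝒯°` as a factor, whereas `2𝒦² + 𝒯² − 𝒦°` reduces to `2a²`.
-/

open Topology

/-- The equiform AW(2) condition `𝒦²𝒯 − 𝒦𝒯° + 𝒯𝒦° − 𝒯³ ≡ 0` for the curve `x ↦ (x, y x, z x)`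
over the parameter set `I`. -/
def IsEquiformAW2On (y z : ℝ → ℝ) (I : Set ℝ) : Prop :=
  ∀ x ∈ I, eqK y z x ^ 2 * eqT y z x - eqK y z x * eqD y z (eqT y z) x +
    eqT y z x * eqD y z (eqK y z) x - eqT y z x ^ 3 = 0

/-- The equiform AW(3) condition `𝒯° − 3𝒦𝒯 ≡ 0` for the curve `x ↦ (x, y x, z x)` over the
parameter set `I`. -/
def IsEquiformAW3On (y z : ℝ → ℝ) (I : Set ℝ) : Prop :=
  ∀ x ∈ I, eqD y z (eqT y z) x - 3 * eqK y z x * eqT y z x = 0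

/-- The expression `2𝒦² + 𝒯² − 𝒦°`, the coefficient of the principal normal in `ρ⁴ • Q₃`, whose
vanishing is the first of the two equations of the equiform AW(1) condition. -/
def aw1NormalCoeff (y z : ℝ → ℝ) (x : ℝ) : ℝ :=
  2 * eqK y z x ^ 2 + eqT y z x ^ 2 - eqD y z (eqK y z) x

lemma hasDerivAt_affine (a b s : ℝ) : HasDerivAt (fun t => a * t + b) a s := by
  simpa using ((hasDerivAt_id s).const_mul a).add_const b

section EquiformInvariants

variable {y z : ℝ → ℝ} {s : ℝ}

lemma curv_ne_zero_iff :
    curv y z s ≠ 0 ↔ deriv (deriv y) s ^ 2 - deriv (deriv z) s ^ 2 ≠ 0 := by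
  rw [curv, Real.sqrt_ne_zero (abs_nonneg _), abs_ne_zero]

lemma curv_eq_abs_of_deriv_deriv_eq_zero (hz : deriv (deriv z) s = 0) :
    curv y z s = |deriv (deriv y) s| := by
  rw [curv, hz, zero_pow two_ne_zero, sub_zero, abs_sq, Real.sqrt_sq_eq_abs]

lemma tors_eq_zero_of_deriv_deriv_eventuallyEq_zero (hz : deriv (deriv z) =ᶠ[𝓝 s] 0) :
    tors y z s = 0 := by
  simp [tors, hz.eq_of_nhds, hz.deriv_eq]

lemma eqT_eventuallyEq_zero_of_deriv_deriv_eventuallyEq_zero (hz : deriv (deriv z) =ᶠ[𝓝 s] 0) :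
    eqT y z =ᶠ[𝓝 s] 0 :=
  hz.eventuallyEq_nhds.mono fun t ht => by
    rw [eqT, tors_eq_zero_of_deriv_deriv_eventuallyEq_zero ht, mul_zero, Pi.zero_apply]

lemma eqK_eventuallyEq_const_of_rho_eventuallyEq_affine {a b : ℝ}
    (hρ : rho y z =ᶠ[𝓝 s] fun t => a * t + b) : eqK y z =ᶠ[𝓝 s] fun _ => a :=
  hρ.deriv.trans (.of_eq (funext fun t => (hasDerivAt_affine a b t).deriv))

lemma eqD_eq_zero_of_eventuallyEq_const {E : Type*} [NormedAddCommGroup E] [NormedSpace ℝ E]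
    {f : ℝ → E} {c : E} (hf : f =ᶠ[𝓝 s] fun _ => c) : eqD y z f s = 0 := by
  rw [eqD, hf.deriv_eq, deriv_const, smul_zero]

lemma isEquiformAW2On_of_eqT_eventuallyEq_zero {I : Set ℝ}
    (hT : ∀ x ∈ I, eqT y z =ᶠ[𝓝 x] 0) : IsEquiformAW2On y z I := fun x hx => by
  simp [(hT x hx).eq_of_nhds, eqD_eq_zero_of_eventuallyEq_const (hT x hx)]

lemma isEquiformAW3On_of_eqT_eventuallyEq_zero {I : Set ℝ}
    (hT : ∀ x ∈ I, eqT y z =ᶠ[𝓝 x] 0) : IsEquiformAW3On y z I := fun x hx => by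
  simp [(hT x hx).eq_of_nhds, eqD_eq_zero_of_eventuallyEq_const (hT x hx)]

lemma aw1NormalCoeff_of_eqK_eventuallyEq_const {c : ℝ} (hK : eqK y z =ᶠ[𝓝 s] fun _ => c) :
    aw1NormalCoeff y z s = 2 * c ^ 2 + eqT y z s ^ 2 := by
  rw [aw1NormalCoeff, hK.eq_of_nhds, eqD_eq_zero_of_eventuallyEq_const hK, sub_zero]

end EquiformInvariants

/-- The `y`-coordinate of the equiform timelike isotropic logarithmic spiral, whose `z`-coordinate
is `0`. It is a total function of `t`: where `a * t + b < 0`, `Real.log` is `log |a * t + b|`. -/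
def logSpiral (a b t : ℝ) : ℝ :=
  (a * t + b) * (Real.log (a * t + b) - 1) / a ^ 2

section LogSpiral

variable {a b s : ℝ}

lemma hasDerivAt_logSpiral (ha : a ≠ 0) (hs : a * s + b ≠ 0) :
    HasDerivAt (logSpiral a b) (Real.log (a * s + b) / a) s := by
  refine (((hasDerivAt_affine a b s).mul
    (((hasDerivAt_affine a b s).log hs).sub_const 1)).div_const (a ^ 2)).congr_deriv ?_
  field_simp
  ring

lemma deriv_deriv_logSpiral (ha : a ≠ 0) (hs : a * s + b ≠ 0) :
    deriv (deriv (logSpiral a b)) s = (a * s + b)⁻¹ := by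
  have hderiv : deriv (logSpiral a b) =ᶠ[𝓝 s] fun t => Real.log (a * t + b) / a := by
    have hne : ∀ᶠ t in 𝓝 s, a * t + b ≠ 0 :=
      (hasDerivAt_affine a b s).continuousAt.eventually_ne hs
    exact hne.mono fun t ht => (hasDerivAt_logSpiral ha ht).deriv
  rw [hderiv.deriv_eq, (((hasDerivAt_affine a b s).log hs).div_const a).deriv]
  field_simp

lemma curv_logSpiral (ha : a ≠ 0) (hs : 0 < a * s + b) :
    curv (logSpiral a b) (fun _ => 0) s = 1 / (a * s + b) := by
  rw [curv_eq_abs_of_deriv_deriv_eq_zero (by simp), deriv_deriv_logSpiral ha hs.ne',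
    abs_of_pos (inv_pos.mpr hs), one_div]

lemma rho_logSpiral_eventuallyEq (ha : a ≠ 0) (hs : 0 < a * s + b) :
    rho (logSpiral a b) (fun _ => 0) =ᶠ[𝓝 s] fun t => a * t + b := by
  have hpos : ∀ᶠ t in 𝓝 s, 0 < a * t + b :=
    continuousAt_const.eventually_lt (hasDerivAt_affine a b s).continuousAt hs
  exact hpos.mono fun t ht => by rw [rho, curv_logSpiral ha ht, one_div_one_div]

end LogSpiral

/-- the equiform timelike isotropic logarithmic spiral of Example 5 is
admissible with `κ(s) = 1/(as+b)`, `τ ≡ 0`, `𝒦 ≡ a`, `𝒯 ≡ 0`; it satisfies the equiform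
AW(2) and AW(3) conditions but not the AW(1) condition, since `2𝒦² + 𝒯² − 𝒦° = 2a² ≠ 0`. -/
theorem pg_example5_log_spiral (a b : ℝ) (ha : a ≠ 0) :
    (∀ s ∈ {s : ℝ | 0 < a * s + b},
      (deriv (deriv (fun t => (a * t + b) * (Real.log (a * t + b) - 1) / a ^ 2)) s) ^ 2 -
        (deriv (deriv (fun _ : ℝ => (0 : ℝ))) s) ^ 2 ≠ 0) ∧
    (∀ s ∈ {s : ℝ | 0 < a * s + b},
      curv (fun t => (a * t + b) * (Real.log (a * t + b) - 1) / a ^ 2)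
        (fun _ => (0 : ℝ)) s = 1 / (a * s + b)) ∧
    (∀ s ∈ {s : ℝ | 0 < a * s + b},
      tors (fun t => (a * t + b) * (Real.log (a * t + b) - 1) / a ^ 2)
        (fun _ => (0 : ℝ)) s = 0) ∧
    (∀ s ∈ {s : ℝ | 0 < a * s + b},
      eqK (fun t => (a * t + b) * (Real.log (a * t + b) - 1) / a ^ 2)
        (fun _ => (0 : ℝ)) s = a) ∧
    (∀ s ∈ {s : ℝ | 0 < a * s + b},
      eqT (fun t => (a * t + b) * (Real.log (a * t + b) - 1) / a ^ 2)
        (fun _ => (0 : ℝ)) s = 0) ∧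
    (∀ s ∈ {s : ℝ | 0 < a * s + b},
      (eqK (fun t => (a * t + b) * (Real.log (a * t + b) - 1) / a ^ 2)
          (fun _ => (0 : ℝ)) s) ^ 2 *
        eqT (fun t => (a * t + b) * (Real.log (a * t + b) - 1) / a ^ 2)
          (fun _ => (0 : ℝ)) s -
        eqK (fun t => (a * t + b) * (Real.log (a * t + b) - 1) / a ^ 2)
          (fun _ => (0 : ℝ)) s *
        eqD (fun t => (a * t + b) * (Real.log (a * t + b) - 1) / a ^ 2) (fun _ => (0 : ℝ))
          (eqT (fun t => (a * t + b) * (Real.log (a * t + b) - 1) / a ^ 2)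
            (fun _ => (0 : ℝ))) s +
        eqT (fun t => (a * t + b) * (Real.log (a * t + b) - 1) / a ^ 2)
          (fun _ => (0 : ℝ)) s *
        eqD (fun t => (a * t + b) * (Real.log (a * t + b) - 1) / a ^ 2) (fun _ => (0 : ℝ))
          (eqK (fun t => (a * t + b) * (Real.log (a * t + b) - 1) / a ^ 2)
            (fun _ => (0 : ℝ))) s -
        (eqT (fun t => (a * t + b) * (Real.log (a * t + b) - 1) / a ^ 2)
          (fun _ => (0 : ℝ)) s) ^ 3 = 0) ∧
    (∀ s ∈ {s : ℝ | 0 < a * s + b},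
      eqD (fun t => (a * t + b) * (Real.log (a * t + b) - 1) / a ^ 2) (fun _ => (0 : ℝ))
          (eqT (fun t => (a * t + b) * (Real.log (a * t + b) - 1) / a ^ 2)
            (fun _ => (0 : ℝ))) s -
        3 * eqK (fun t => (a * t + b) * (Real.log (a * t + b) - 1) / a ^ 2)
            (fun _ => (0 : ℝ)) s *
          eqT (fun t => (a * t + b) * (Real.log (a * t + b) - 1) / a ^ 2)
            (fun _ => (0 : ℝ)) s = 0) ∧
    (∀ s ∈ {s : ℝ | 0 < a * s + b},
      2 * (eqK (fun t => (a * t + b) * (Real.log (a * t + b) - 1) / a ^ 2)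
            (fun _ => (0 : ℝ)) s) ^ 2 +
        (eqT (fun t => (a * t + b) * (Real.log (a * t + b) - 1) / a ^ 2)
          (fun _ => (0 : ℝ)) s) ^ 2 -
        eqD (fun t => (a * t + b) * (Real.log (a * t + b) - 1) / a ^ 2) (fun _ => (0 : ℝ))
          (eqK (fun t => (a * t + b) * (Real.log (a * t + b) - 1) / a ^ 2)
            (fun _ => (0 : ℝ))) s = 2 * a ^ 2 ∧ 2 * a ^ 2 ≠ 0) := by
  have hz (s : ℝ) : deriv (deriv fun _ : ℝ => (0 : ℝ)) =ᶠ[𝓝 s] 0 := .of_eq (by ext; simp)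
  have hT (s : ℝ) : eqT (logSpiral a b) (fun _ => 0) =ᶠ[𝓝 s] 0 :=
    eqT_eventuallyEq_zero_of_deriv_deriv_eventuallyEq_zero (hz s)
  have hK {s : ℝ} (hs : 0 < a * s + b) :
      eqK (logSpiral a b) (fun _ => 0) =ᶠ[𝓝 s] fun _ => a :=
    eqK_eventuallyEq_const_of_rho_eventuallyEq_affine (rho_logSpiral_eventuallyEq ha hs)
  have hadm {s : ℝ} (hs : 0 < a * s + b) : curv (logSpiral a b) (fun _ => 0) s ≠ 0 := by
    rw [curv_logSpiral ha hs]
    exact one_div_ne_zero hs.ne'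
  have haw1 {s : ℝ} (hs : 0 < a * s + b) :
      aw1NormalCoeff (logSpiral a b) (fun _ => 0) s = 2 * a ^ 2 := by
    simp [aw1NormalCoeff_of_eqK_eventuallyEq_const (hK hs), (hT s).eq_of_nhds]
  exact ⟨fun s hs => curv_ne_zero_iff.mp (hadm hs),
    fun s hs => curv_logSpiral ha hs,
    fun s _ => tors_eq_zero_of_deriv_deriv_eventuallyEq_zero (hz s),
    fun s hs => (hK hs).eq_of_nhds,
    fun s _ => (hT s).eq_of_nhds,
    isEquiformAW2On_of_eqT_eventuallyEq_zero fun s _ => hT s,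
    isEquiformAW3On_of_eqT_eventuallyEq_zero fun s _ => hT s,
    fun s hs => ⟨haw1 hs, by positivity⟩⟩
end
end
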